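/- For every k ∈ ℕ there exists a finite family of real numbers (C^k_{l_1,l_2}) indexed by l_1, l_2 ∈ ℕ with 0 ≤ l_1 + l_2 ≤ k+1 such that, for every smooth function f : ℝ → ℂ and every x ∈ ℝ, ( ((−1)^0 d/dx + x) ∘ ((−1)^1 d/dx + x) ∘ ⋯ ∘ ((−1)^k d/dx + x) ) f (x) = Σ_{0 ≤ l_1+l_2 ≤ k+1} C^k_{l_1,l_2} x^{l_1} f^{(l_2)}(x), and moreover |C^k_{l_1,l_2}| ≤ 3^k (k+1)^{(k+1−l_1−l_2)/2} for all 0 ≤ l_1 + l_2 ≤ k+1. -/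

import Mathlib

/-!
Record the operator `∑ c a b x^a D^b` by its normally ordered symbol, the bivariate polynomial
`∑ c a b Y^a X^b`. The Leibniz rule shows that composing on the left with `ε D + x` changes the
symbol `P` to `ε (X P + ∂P/∂Y) + Y P`. For `s = √(k + 1)`, each of the three terms raises the
weighted norm `max |c a b| s ^ (a + b)` by a factor of at most `s`: multiplication by a variable
shifts the weight by one, while `∂/∂Y` gains a factor `a ≤ s ^ 2` and loses one power of `s`.
The innermost factor `ε D + x` has weighted norm at most `s`, and each of the `k` others
contributes `3 s`, so `|c a b| s ^ (a + b) ≤ 3 ^ k s ^ (k + 1)`.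
-/

open scoped BigOperators

noncomputable section

/-- The first order operator A_j = (-1)^j d/dx + x (multiplication by x). -/
def creAnnOp (j : ℕ) (g : ℝ → ℂ) : ℝ → ℂ :=
  fun y => ((-1 : ℂ)) ^ j * deriv g y + (y : ℂ) * g y

open Polynomial
open scoped Polynomial.Bivariate

section BivariateLift

variable {R M : Type*} [Semiring R] [AddCommMonoid M] [Module R M]

lemma bivariate_induction {motive : R[X][Y] → Prop} (P : R[X][Y])
    (add : ∀ P Q, motive P → motive Q → motive (P + Q))
    (mono : ∀ a b c, motive (monomial a (monomial b c))) : motive P := by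
  induction P using Polynomial.induction_on' with
  | add P Q hP hQ => exact add P Q hP hQ
  | monomial a q =>
    induction q using Polynomial.induction_on' with
    | add p q hp hq => simpa only [map_add] using add _ _ hp hq
    | monomial b c => exact mono a b c

/-- The linear map on bivariate polynomials sending `Y ^ a * X ^ b` to `u a b`: the evaluation of
a symbol on a doubly indexed family of vectors. -/
def bivariateLift (u : ℕ → ℕ → M) : R[X][Y] →ₗ[R] M :=
  lsum fun a => lsum fun b => LinearMap.toSpanSingleton R M (u a b)

@[simp]
lemma bivariateLift_monomial (u : ℕ → ℕ → M) (a b : ℕ) (c : R) :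
    bivariateLift u (monomial a (monomial b c)) = c • u a b := by
  simp [bivariateLift, lsum_apply]

lemma bivariateLift_eq_sum {P : R[X][Y]} {n : ℕ}
    (hP : ∀ a b, n < a + b → (P.coeff a).coeff b = 0) (u : ℕ → ℕ → M) :
    bivariateLift u P =
      ∑ a ∈ Finset.range (n + 1), ∑ b ∈ Finset.range (n + 1 - a),
        (P.coeff a).coeff b • u a b := by
  have natDegree_lt : P.natDegree < n + 1 :=
    Nat.lt_succ_of_le <| natDegree_le_iff_coeff_eq_zero.2 fun a ha => by
      ext b
      exact hP a b (by omega)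
  have natDegree_coeff_lt {a : ℕ} (ha : a ∈ Finset.range (n + 1)) :
      (P.coeff a).natDegree < n + 1 - a := by
    have han := Finset.mem_range.1 ha
    have : (P.coeff a).natDegree ≤ n - a :=
      natDegree_le_iff_coeff_eq_zero.2 fun b hb => hP a b (by omega)
    omega
  rw [bivariateLift, lsum_apply, sum_over_range' _ (fun _ => map_zero _) _ natDegree_lt]
  refine Finset.sum_congr rfl fun a ha => ?_
  rw [lsum_apply, sum_over_range' _ (fun _ => map_zero _) _ (natDegree_coeff_lt ha)]
  rfl

lemma bivariateLift_C_X_mul (u : ℕ → ℕ → M) (P : R[X][Y]) :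
    bivariateLift u (C X * P) = bivariateLift (fun a b => u a (b + 1)) P := by
  induction P using bivariate_induction with
  | add P Q hP hQ => simp only [mul_add, map_add, hP, hQ]
  | mono a b c => simp [C_mul_monomial, X_mul_monomial]

lemma bivariateLift_derivative (u : ℕ → ℕ → M) (P : R[X][Y]) :
    bivariateLift u (derivative P) = bivariateLift (fun a b => (a : R) • u (a - 1) b) P := by
  induction P using bivariate_induction with
  | add P Q hP hQ => simp only [map_add, hP, hQ]
  | mono a b c =>
    have h : monomial b c * (a : R[X]) = monomial b (c * a) := by
      rw [← C_eq_natCast, monomial_mul_C]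
    simp [derivative_monomial, h, mul_smul]

end BivariateLift

section Symbol

variable {R : Type*} [Semiring R]

/-- The symbol of `(ε D + x) ∘ T`, where `P` is the normally ordered symbol of `T`; the
outer variable `Y`, with respect to which `derivative` differentiates, stands for the position
`x`, and `X` for `D`. -/
def ladderSymbol (ε : R) (P : R[X][Y]) : R[X][Y] :=
  ε • (C X * P + derivative P) + Y * P

lemma coeff_coeff_ladderSymbol (ε : R) (P : R[X][Y]) (a b : ℕ) :
    ((ladderSymbol ε P).coeff a).coeff b =
      ε * ((X * P.coeff a).coeff b + (P.coeff (a + 1)).coeff b * (a + 1)) +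
        ((Y * P).coeff a).coeff b := by
  simp [ladderSymbol, coeff_derivative, mul_add]

/-- The normally ordered symbol of `(ε₁ D + x) ∘ ⋯ ∘ (εₙ D + x)`. -/
def ladderProductSymbol (L : List R) : R[X][Y] :=
  L.foldr ladderSymbol 1

lemma ladderProductSymbol_cons (ε : R) (L : List R) :
    ladderProductSymbol (ε :: L) = ladderSymbol ε (ladderProductSymbol L) :=
  rfl

lemma coeff_coeff_ladderProductSymbol_eq_zero {L : List R} {a b : ℕ} (h : L.length < a + b) :
    ((ladderProductSymbol L).coeff a).coeff b = 0 := by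
  induction L generalizing a b with
  | nil =>
    rcases a with _ | a
    · simp [ladderProductSymbol, coeff_one, show b ≠ 0 by simpa using h.ne']
    · simp [ladderProductSymbol, coeff_one]
  | cons ε L ih =>
    rw [List.length_cons] at h
    rw [ladderProductSymbol_cons, coeff_coeff_ladderSymbol, ih (a := a + 1) (by omega)]
    rcases a with _ | a <;> rcases b with _ | b <;> simp only [coeff_X_mul, coeff_X_mul_zero]
    · omega
    · simp [ih (a := 0) (b := b) (by omega)]
    · simp [ih (a := a) (b := 0) (by omega)]
    · simp [ih (a := a + 1) (b := b) (by omega), ih (a := a) (b := b + 1) (by omega)]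

lemma natDegree_ladderProductSymbol_le (L : List R) :
    (ladderProductSymbol L).natDegree ≤ L.length :=
  natDegree_le_iff_coeff_eq_zero.2 fun a ha => by
    ext b
    exact coeff_coeff_ladderProductSymbol_eq_zero (ha.trans_le le_self_add)

end Symbol

section Operator

variable {𝕜 E : Type*} [NontriviallyNormedField 𝕜] [NormedAddCommGroup E] [NormedSpace 𝕜 E]

/-- The first order operator `ε D + x` on vector-valued functions. -/
def ladderOp (ε : 𝕜) (g : 𝕜 → E) : 𝕜 → E :=
  fun y => ε • deriv g y + y • g y

/-- The operator `∑ c a b x ^ a D ^ b` with normally ordered symbol `∑ c a b Y ^ a X ^ b`. -/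
def normalOrderedOp (P : 𝕜[X][Y]) (f : 𝕜 → E) (x : 𝕜) : E :=
  bivariateLift (fun a b => x ^ a • iteratedDeriv b f x) P

lemma normalOrderedOp_eq_sum {P : 𝕜[X][Y]} {n : ℕ}
    (hP : ∀ a b, n < a + b → (P.coeff a).coeff b = 0) (f : 𝕜 → E) (x : 𝕜) :
    normalOrderedOp P f x =
      ∑ a ∈ Finset.range (n + 1), ∑ b ∈ Finset.range (n + 1 - a),
        ((P.coeff a).coeff b * x ^ a) • iteratedDeriv b f x := by
  simp only [normalOrderedOp, bivariateLift_eq_sum hP, mul_smul]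

lemma normalOrderedOp_Y_mul (P : 𝕜[X][Y]) (f : 𝕜 → E) (x : 𝕜) :
    normalOrderedOp (Y * P) f x = x • normalOrderedOp P f x := by
  unfold normalOrderedOp
  induction P using bivariate_induction with
  | add P Q hP hQ => simp only [mul_add, map_add, smul_add, hP, hQ]
  | mono a b c =>
    simp only [X_mul_monomial, bivariateLift_monomial, pow_succ', mul_smul, smul_comm c x]

lemma hasDerivAt_normalOrderedOp {P : 𝕜[X][Y]} {n : ℕ}
    (hP : ∀ a b, n < a + b → (P.coeff a).coeff b = 0) {f : 𝕜 → E}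
    (hf : ContDiff 𝕜 (n + 1) f) (x : 𝕜) :
    HasDerivAt (normalOrderedOp P f) (normalOrderedOp (C X * P + derivative P) f x) x := by
  have hasDerivAt_term {a b : ℕ} (hb : b < n + 1) :
      HasDerivAt (fun y => y ^ a • iteratedDeriv b f y)
        (x ^ a • iteratedDeriv (b + 1) f x + (a : 𝕜) • x ^ (a - 1) • iteratedDeriv b f x) x := by
    have hD : HasDerivAt (iteratedDeriv b f) (iteratedDeriv (b + 1) f x) x := by
      rw [iteratedDeriv_succ]
      exact (hf.differentiable_iteratedDeriv b (mod_cast hb) x).hasDerivAt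
    simpa only [mul_smul] using (hasDerivAt_pow a x).fun_smul hD
  unfold normalOrderedOp
  simp only [map_add, bivariateLift_C_X_mul, bivariateLift_derivative, bivariateLift_eq_sum hP,
    ← Finset.sum_add_distrib, ← smul_add]
  refine HasDerivAt.fun_sum fun a _ => HasDerivAt.fun_sum fun b hb => ?_
  have hbn : b < n + 1 := (Finset.mem_range.1 hb).trans_le (Nat.sub_le _ _)
  exact (hasDerivAt_term hbn).const_smul _

lemma ladderOp_normalOrderedOp {P : 𝕜[X][Y]} {n : ℕ}
    (hP : ∀ a b, n < a + b → (P.coeff a).coeff b = 0) {f : 𝕜 → E}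
    (hf : ContDiff 𝕜 (n + 1) f) (ε : 𝕜) :
    ladderOp ε (normalOrderedOp P f) = normalOrderedOp (ladderSymbol ε P) f := by
  funext x
  rw [ladderOp, (hasDerivAt_normalOrderedOp hP hf x).deriv, ← normalOrderedOp_Y_mul]
  simp only [normalOrderedOp, ladderSymbol, map_add, map_smul]

theorem foldr_ladderOp_eq_normalOrderedOp (L : List 𝕜) {f : 𝕜 → E}
    (hf : ContDiff 𝕜 L.length f) :
    L.foldr ladderOp f = normalOrderedOp (ladderProductSymbol L) f := by
  induction L with
  | nil =>
    funext x
    have one_eq : (1 : 𝕜[X][Y]) = monomial 0 (monomial 0 1) := rfl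
    simp only [normalOrderedOp, ladderProductSymbol, List.foldr_nil, one_eq,
      bivariateLift_monomial, pow_zero, one_smul, iteratedDeriv_zero]
  | cons ε L ih =>
    rw [List.length_cons, Nat.cast_succ] at hf
    rw [List.foldr_cons, ih (hf.of_le le_self_add),
      ladderOp_normalOrderedOp (fun _ _ => coeff_coeff_ladderProductSymbol_eq_zero) hf,
      ladderProductSymbol_cons]

end Operator

section Bound

variable {𝕜 : Type*} [NormedField 𝕜]

lemma norm_coeff_coeff_ladderSymbol_mul_pow_le {ε : 𝕜} (hε : ‖ε‖ ≤ 1) {P : 𝕜[X][Y]} {s B : ℝ}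
    (hs : 0 ≤ s) (hdeg : (P.natDegree : ℝ) ≤ s ^ 2)
    (hP : ∀ a b, ‖(P.coeff a).coeff b‖ * s ^ (a + b) ≤ B) (a b : ℕ) :
    ‖((ladderSymbol ε P).coeff a).coeff b‖ * s ^ (a + b) ≤ 3 * s * B := by
  have hB : 0 ≤ B := le_trans (by positivity) (hP 0 0)
  have mul_X : ‖(X * P.coeff a).coeff b‖ * s ^ (a + b) ≤ s * B := by
    rcases b with _ | b
    · simpa using mul_nonneg hs hB
    · calc ‖(X * P.coeff a).coeff (b + 1)‖ * s ^ (a + (b + 1))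
          = s * (‖(P.coeff a).coeff b‖ * s ^ (a + b)) := by rw [coeff_X_mul]; ring
        _ ≤ s * B := by gcongr; exact hP a b
  have mul_Y : ‖((Y * P).coeff a).coeff b‖ * s ^ (a + b) ≤ s * B := by
    rcases a with _ | a
    · simpa using mul_nonneg hs hB
    · calc ‖((Y * P).coeff (a + 1)).coeff b‖ * s ^ (a + 1 + b)
          = s * (‖(P.coeff a).coeff b‖ * s ^ (a + b)) := by rw [coeff_X_mul]; ring
        _ ≤ s * B := by gcongr; exact hP a b
  have deriv_Y : ‖(P.coeff (a + 1)).coeff b * (a + 1)‖ * s ^ (a + b) ≤ s * B := by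
    rcases lt_or_ge P.natDegree (a + 1) with ha | ha
    · simpa [coeff_eq_zero_of_natDegree_lt ha] using mul_nonneg hs hB
    · have norm_succ_le : ‖(a + 1 : 𝕜)‖ ≤ s ^ 2 := by
        calc ‖(a + 1 : 𝕜)‖ ≤ (a + 1 : ℕ) := by simpa using Nat.norm_cast_le (α := 𝕜) (a + 1)
          _ ≤ P.natDegree := mod_cast ha
          _ ≤ s ^ 2 := hdeg
      calc ‖(P.coeff (a + 1)).coeff b * (a + 1)‖ * s ^ (a + b)
          ≤ ‖(P.coeff (a + 1)).coeff b‖ * s ^ 2 * s ^ (a + b) := by rw [norm_mul]; gcongr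
        _ = s * (‖(P.coeff (a + 1)).coeff b‖ * s ^ (a + 1 + b)) := by ring
        _ ≤ s * B := by gcongr; exact hP (a + 1) b
  have norm_le : ‖((ladderSymbol ε P).coeff a).coeff b‖ ≤
      ‖(X * P.coeff a).coeff b‖ + ‖(P.coeff (a + 1)).coeff b * (a + 1)‖ +
        ‖((Y * P).coeff a).coeff b‖ := by
    rw [coeff_coeff_ladderSymbol]
    refine (norm_add_le _ _).trans (add_le_add_left ?_ _)
    rw [norm_mul]
    exact (mul_le_of_le_one_left (norm_nonneg _) hε).trans (norm_add_le _ _)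
  calc _ ≤ _ := mul_le_mul_of_nonneg_right norm_le (by positivity)
    _ ≤ 3 * s * B := by linarith

lemma norm_coeff_coeff_ladderProductSymbol_mul_pow_le {k : ℕ} {L : List 𝕜}
    (hL : L.length = k + 1) (hL_norm : ∀ ε ∈ L, ‖ε‖ ≤ 1) {s : ℝ} (hs : 0 ≤ s)
    (hks : (k : ℝ) ≤ s ^ 2) (a b : ℕ) :
    ‖((ladderProductSymbol L).coeff a).coeff b‖ * s ^ (a + b) ≤ 3 ^ k * s ^ (k + 1) := by
  induction k generalizing L a b with
  | zero =>
    obtain ⟨ε, rfl⟩ := List.length_eq_one_iff.1 hL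
    have hε : ‖ε‖ ≤ 1 := hL_norm ε (List.mem_singleton_self ε)
    rw [ladderProductSymbol_cons, coeff_coeff_ladderSymbol]
    rcases a with _ | _ | a <;> rcases b with _ | _ | b <;>
      simp [ladderProductSymbol, coeff_one, coeff_X, hs, mul_le_of_le_one_left hs hε]
  | succ k ih =>
    obtain ⟨ε, L, rfl⟩ := List.exists_cons_of_length_eq_add_one hL
    obtain ⟨hε, hL_norm⟩ := List.forall_mem_cons.1 hL_norm
    have hL : L.length = k + 1 := by simpa using hL
    have natDegree_le : (ladderProductSymbol L).natDegree ≤ k + 1 :=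
      hL ▸ natDegree_ladderProductSymbol_le L
    calc ‖((ladderProductSymbol (ε :: L)).coeff a).coeff b‖ * s ^ (a + b)
        ≤ 3 * s * (3 ^ k * s ^ (k + 1)) :=
          norm_coeff_coeff_ladderSymbol_mul_pow_le hε hs
            ((Nat.cast_le.2 natDegree_le).trans hks)
            (ih hL hL_norm ((Nat.cast_le.2 k.le_succ).trans hks)) a b
      _ = 3 ^ (k + 1) * s ^ (k + 1 + 1) := by ring

lemma norm_coeff_coeff_ladderProductSymbol_le {k : ℕ} {L : List 𝕜}
    (hL : L.length = k + 1) (hL_norm : ∀ ε ∈ L, ‖ε‖ ≤ 1) (a b : ℕ) :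
    ‖((ladderProductSymbol L).coeff a).coeff b‖ ≤
      3 ^ k * ((k : ℝ) + 1) ^ (((k : ℝ) + 1 - a - b) / 2) := by
  set s : ℝ := √((k : ℝ) + 1) with hs
  have hk : (0 : ℝ) < k + 1 := by positivity
  have hs_pos : 0 < s := Real.sqrt_pos.2 hk
  have rpow_mul_pow : ((k : ℝ) + 1) ^ (((k : ℝ) + 1 - a - b) / 2) * s ^ (a + b) = s ^ (k + 1) := by
    rw [hs, Real.sqrt_eq_rpow, ← Real.rpow_mul_natCast hk.le, ← Real.rpow_mul_natCast hk.le,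
      ← Real.rpow_add hk]
    congr 1
    push_cast
    ring
  have hks : (k : ℝ) ≤ s ^ 2 := by
    rw [hs, Real.sq_sqrt hk.le]
    exact (lt_add_one _).le
  refine le_of_mul_le_mul_right ?_ (pow_pos hs_pos (a + b))
  rw [mul_assoc, rpow_mul_pow]
  exact norm_coeff_coeff_ladderProductSymbol_mul_pow_le hL hL_norm hs_pos.le hks a b

end Bound

theorem creation_annihilation_product_expansion_general {𝕜 E : Type*} [NontriviallyNormedField 𝕜]
    [NormedAddCommGroup E] [NormedSpace 𝕜 E] {k : ℕ} {L : List 𝕜} (hL : L.length = k + 1)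
    (hL_norm : ∀ ε ∈ L, ‖ε‖ ≤ 1) :
    ∃ C : ℕ → ℕ → 𝕜,
      (∀ f : 𝕜 → E, ContDiff 𝕜 (k + 1) f → ∀ x : 𝕜,
        L.foldr ladderOp f x =
          ∑ l₁ ∈ Finset.range (k + 2), ∑ l₂ ∈ Finset.range (k + 2 - l₁),
            (C l₁ l₂ * x ^ l₁) • iteratedDeriv l₂ f x) ∧
      ∀ l₁ l₂ : ℕ, ‖C l₁ l₂‖ ≤ 3 ^ k * ((k : ℝ) + 1) ^ (((k : ℝ) + 1 - l₁ - l₂) / 2) := by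
  refine ⟨fun l₁ l₂ => ((ladderProductSymbol L).coeff l₁).coeff l₂, fun f hf x => ?_,
    norm_coeff_coeff_ladderProductSymbol_le hL hL_norm⟩
  have hfL : ContDiff 𝕜 L.length f := by simpa [hL] using hf
  rw [foldr_ladderOp_eq_normalOrderedOp L hfL]
  exact normalOrderedOp_eq_sum
    (fun _ _ h => coeff_coeff_ladderProductSymbol_eq_zero (hL.trans_lt h)) f x

lemma creAnnOp_eq_ladderOp (j : ℕ) : creAnnOp j = ladderOp ((-1 : ℝ) ^ j) := by
  funext g y
  simp [creAnnOp, ladderOp]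

/-- **Lemma "dvpt"**: expansion of the product ∏_{j=0}^k ((-1)^j ∂_x + x)
(the factor j = 0 acting last) in the form Σ C^k_{l₁,l₂} x^{l₁} ∂^{l₂},
with |C^k_{l₁,l₂}| ≤ 3^k (k+1)^{(k+1-l₁-l₂)/2}. -/
theorem creation_annihilation_product_expansion (k : ℕ) :
    ∃ C : ℕ → ℕ → ℝ,
      (∀ f : ℝ → ℂ, ContDiff ℝ (⊤ : ℕ∞) f → ∀ x : ℝ,
        ((List.range (k + 1)).foldr (fun j g => creAnnOp j g) f) x =
          ∑ l₁ ∈ Finset.range (k + 2), ∑ l₂ ∈ Finset.range (k + 2 - l₁),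
            (C l₁ l₂ : ℂ) * (x : ℂ) ^ l₁ * iteratedDeriv l₂ f x) ∧
      ∀ l₁ l₂ : ℕ, l₁ + l₂ ≤ k + 1 →
        |C l₁ l₂| ≤ 3 ^ k * ((k : ℝ) + 1) ^ (((k : ℝ) + 1 - l₁ - l₂) / 2) := by
  obtain ⟨C, hC, hC_norm⟩ := creation_annihilation_product_expansion_general (E := ℂ)
    (L := (List.range (k + 1)).map ((-1 : ℝ) ^ ·)) (k := k) (by simp) (by simp)
  refine ⟨C, fun f hf x => ?_, fun l₁ l₂ _ => hC_norm l₁ l₂⟩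
  simpa [creAnnOp_eq_ladderOp, List.foldr_map] using hC f (contDiff_infty.1 hf (k + 1)) x

end
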